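/- arXiv:1602.06685 — 2 statements merged into one kernel-verified Lean document; each statement's English description precedes it below -/
import Mathlib

section
/- Under the one-period assumptions (quantitative no-arbitrage with constant α ∈ (0,1]; V a random utility; asymptotic elasticity with constants γ̄ ≥ 0, K > 0 and integrable C ≥ 0; and E V⁺(·, 1 + h·Y) < ∞ for all h ∈ 𝓗_1): for every x ≥ 0 the value v(x) := sup_{h ∈ 𝓗_x} E V(·, x + h·Y(·)) is finite, and there exists an optimal ĥ ∈ D_x with v(x) = E V(·, x + ĥ·Y(·)). Moreover, the function v : ℝ → [−∞, ∞) (with v(x) := −∞ for x < 0) is nondecreasing and upper semicontinuous on ℝ. -/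
/-!
The optimizer exists because the problem is compact and upper semicontinuous.

*Compactness.* Since `Y ∈ D` almost surely, replacing a strategy by its orthogonal projection onto
`D` changes no payoff (`exists_proj`), so the supremum may be taken over `D_x`. Quantitative
no-arbitrage gives `‖h‖ ≤ x / α` for `h ∈ D_x` (`Dx_norm_le`).

*Domination.* Choose a basis `b₁, …, b_k` of the span of `D_1` among the elements of `D_1`. As `D_1`
is bounded, every `h ∈ D_1` is `∑ c_j b_j` with `|c_j| ≤ M` for a common `M`, and `b_j·Y ≥ -1` yields
`h·Y ≤ M (∑ b_j)·Y + 2kM`. Hence a small multiple `θ ∈ 𝓗_1` of `∑ b_j` satisfies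
`1 + h·Y ≤ λ (1/2 + θ·Y)` for all `h ∈ D_1` at once (`exists_dominating`). By scaling and asymptotic
elasticity, `V⁺(x + h·Y)` is bounded, for all `0 ≤ x ≤ R` and `h ∈ D_x`, by a multiple of
`V⁺(1 + θ·Y) + C`, which is integrable (`exists_bound`).

*Semicontinuity.* Fatou's lemma for the negative parts and its reverse form for the positive parts
show that expected utility is upper semicontinuous along convergent wealths and strategies
(`limsup_geint_le`). With compactness this gives `exists_limit_strategy`: a level attained
asymptotically along `x n → x` is attained at `x`. Applied to a constant `x n` it provides the
optimizer, and applied to a general sequence the upper semicontinuity of `v`.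
-/

open MeasureTheory ProbabilityTheory Set
open scoped ENNReal InnerProductSpace

noncomputable section

/-- `d`-dimensional Euclidean space `ℝ^d`. -/
abbrev Evec (d : ℕ) : Type := EuclideanSpace ℝ (Fin d)

/-- The positive part of an extended real, as an element of `[0,∞]`. -/
def ePos (x : EReal) : ℝ≥0∞ := if x = ⊤ then ⊤ else ENNReal.ofReal x.toReal

/-- The generalised integral `∫ f dμ := ∫ f⁺ dμ − ∫ f⁻ dμ` of an extended-real valued
function, with values in `ℝ ∪ {±∞}`. -/
def geint {α : Type*} [MeasurableSpace α] (μ : Measure α) (f : α → EReal) : EReal :=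
  ((∫⁻ a, ePos (f a) ∂μ : ℝ≥0∞) : EReal) - ((∫⁻ a, ePos (-f a) ∂μ : ℝ≥0∞) : EReal)

variable {d : ℕ} {Ω : Type*} [MeasurableSpace Ω]

/-- The support of the law of `Y` under `Q`: the intersection of all closed sets `A`
with `Q(Y ∈ A) = 1`. -/
def suppY (Q : Measure Ω) (Y : Ω → Evec d) : Set (Evec d) :=
  ⋂₀ {A : Set (Evec d) | IsClosed A ∧ Q (Y ⁻¹' A) = 1}

/-- `D`: the smallest affine subspace of `ℝ^d` containing the support of the law of `Y`. -/
def Dv (Q : Measure Ω) (Y : Ω → Evec d) : Set (Evec d) :=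
  (affineSpan ℝ (suppY Q Y) : Set (Evec d))

/-- `𝓗_x := {h ∈ ℝ^d : Q(x + h·Y ≥ 0) = 1}`. -/
def Hx (Q : Measure Ω) (Y : Ω → Evec d) (x : ℝ) : Set (Evec d) :=
  {h | Q {ω | 0 ≤ x + ⟪h, Y ω⟫_ℝ} = 1}

/-- `D_x := 𝓗_x ∩ D`. -/
def Dx (Q : Measure Ω) (Y : Ω → Evec d) (x : ℝ) : Set (Evec d) := Hx Q Y x ∩ Dv Q Y

/-- The one-period value function `v(x) = sup_{h ∈ 𝓗_x} E V(·, x + h·Y)` for `x ≥ 0`,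
and `v(x) = −∞` for `x < 0`. -/
def vopt (Q : Measure Ω) (Y : Ω → Evec d) (V : Ω → ℝ → EReal) : ℝ → EReal :=
  fun x => if 0 ≤ x then ⨆ h ∈ Hx Q Y x, geint Q (fun ω => V ω (x + ⟪h, Y ω⟫_ℝ)) else ⊥

open Filter Topology

/-! ### Positive parts and the generalised integral -/

lemma ePos_eq (x : EReal) : ePos x = x.toENNReal := rfl

lemma ePos_mono : Monotone ePos := fun _ _ h => EReal.toENNReal_le_toENNReal h

lemma continuous_ePos : Continuous ePos := EReal.continuous_toENNReal

lemma measurable_ePos : Measurable ePos := measurable_ereal_toENNReal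

lemma geint_mono_ae {μ : Measure Ω} {f g : Ω → EReal} (h : ∀ᵐ ω ∂μ, f ω ≤ g ω) :
    geint μ f ≤ geint μ g := by
  refine EReal.sub_le_sub ?_ ?_
  · exact EReal.coe_ennreal_le_coe_ennreal_iff.2
      (lintegral_mono_ae (h.mono fun ω hω => ePos_mono hω))
  · exact EReal.coe_ennreal_le_coe_ennreal_iff.2
      (lintegral_mono_ae (h.mono fun ω hω => ePos_mono (EReal.neg_le_neg_iff.2 hω)))

/-! ### Admissible strategies -/

lemma mem_Hx_iff {Q : Measure Ω} [IsProbabilityMeasure Q] {Y : Ω → Evec d} (hY : Measurable Y)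
    {x : ℝ} {h : Evec d} : h ∈ Hx Q Y x ↔ ∀ᵐ ω ∂Q, 0 ≤ x + ⟪h, Y ω⟫_ℝ := by
  have hm : MeasurableSet {ω | 0 ≤ x + ⟪h, Y ω⟫_ℝ} :=
    measurableSet_le measurable_const (measurable_const.add (measurable_const.inner hY))
  exact (mem_ae_iff_prob_eq_one hm).symm

/-- When `0 ∈ D`, the affine subspace `D` is the vector subspace given by its direction. -/
lemma mem_Dv_iff {Q : Measure Ω} {Y : Ω → Evec d} (h0D : (0 : Evec d) ∈ Dv Q Y) (h : Evec d) :
    h ∈ Dv Q Y ↔ h ∈ (affineSpan ℝ (suppY Q Y)).direction := by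
  have := AffineSubspace.vsub_right_mem_direction_iff_mem (s := affineSpan ℝ (suppY Q Y)) h0D h
  simpa [Dv] using this.symm

/-- `Y` lies almost surely in its support: by the Lindelöf property, the complement of the support
is a countable union of open null sets. -/
lemma ae_mem_suppY (Q : Measure Ω) [IsProbabilityMeasure Q] {Y : Ω → Evec d} (hY : Measurable Y) :
    ∀ᵐ ω ∂Q, Y ω ∈ suppY Q Y := by
  obtain ⟨T, hTc, hTS, hTU⟩ := TopologicalSpace.isOpen_sUnion_countable
    (compl '' {A : Set (Evec d) | IsClosed A ∧ Q (Y ⁻¹' A) = 1}) (by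
      rintro _ ⟨A, hA, rfl⟩
      exact hA.1.isOpen_compl)
  have h1 : ∀ U ∈ T, ∀ᵐ ω ∂Q, Y ω ∉ U := by
    intro U hU
    obtain ⟨A, hA, rfl⟩ := hTS hU
    have := (mem_ae_iff_prob_eq_one (hY hA.1.measurableSet)).2 hA.2
    filter_upwards [this] with ω hω
    simpa using hω
  filter_upwards [(ae_ball_iff hTc).2 h1] with ω hω
  have h2 : Y ω ∉ ⋃₀ T := by
    rintro ⟨U, hU, h⟩
    exact hω U hU h
  rw [hTU, ← Set.compl_sInter] at h2
  simpa [suppY] using h2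

lemma ae_mem_direction (Q : Measure Ω) [IsProbabilityMeasure Q] {Y : Ω → Evec d}
    (hY : Measurable Y) (h0D : (0 : Evec d) ∈ Dv Q Y) :
    ∀ᵐ ω ∂Q, Y ω ∈ (affineSpan ℝ (suppY Q Y)).direction := by
  filter_upwards [ae_mem_suppY Q hY] with ω hω
  exact (mem_Dv_iff h0D _).1 (subset_affineSpan ℝ _ hω)

/-- Orthogonal projection onto `D` does not change the payoff, so strategies can be taken in `D`. -/
lemma exists_proj {Q : Measure Ω} [IsProbabilityMeasure Q] {Y : Ω → Evec d}
    (hY : Measurable Y) (h0D : (0 : Evec d) ∈ Dv Q Y) {x : ℝ} {h : Evec d} (hh : h ∈ Hx Q Y x) :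
    ∃ h' ∈ Dx Q Y x, ∀ᵐ ω ∂Q, ⟪h', Y ω⟫_ℝ = ⟪h, Y ω⟫_ℝ := by
  set P := (affineSpan ℝ (suppY Q Y)).direction with hP
  have key : ∀ᵐ ω ∂Q, ⟪P.starProjection h, Y ω⟫_ℝ = ⟪h, Y ω⟫_ℝ := by
    filter_upwards [ae_mem_direction Q hY h0D] with ω hω
    have := P.starProjection_inner_eq_zero h (Y ω) hω
    rw [inner_sub_left] at this
    linarith
  refine ⟨P.starProjection h, ⟨?_, ?_⟩, key⟩
  · rw [mem_Hx_iff hY] at hh ⊢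
    filter_upwards [hh, key] with ω h1 h2
    rwa [h2]
  · exact (mem_Dv_iff h0D _).2 (P.starProjection_apply_mem h)

/-- Quantitative no-arbitrage bounds admissible strategies: the loss `α‖h‖`, incurred with positive
probability, cannot exceed the initial wealth. -/
lemma Dx_norm_le {Q : Measure Ω} [IsProbabilityMeasure Q] {Y : Ω → Evec d}
    (hY : Measurable Y) {α : ℝ} (hα : 0 < α)
    (hNA : ∀ h ∈ Dv Q Y, ENNReal.ofReal α ≤ Q {ω | ⟪h, Y ω⟫_ℝ ≤ -α * ‖h‖})
    {x : ℝ} {h : Evec d} (hh : h ∈ Dx Q Y x) : ‖h‖ ≤ x / α := by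
  by_contra hc
  rw [not_le, div_lt_iff₀ hα] at hc
  have h1 := (mem_Hx_iff hY).1 hh.1
  have h2 : Q {ω | ⟪h, Y ω⟫_ℝ ≤ -α * ‖h‖} = 0 := by
    refine measure_mono_null ?_ h1
    intro ω hω hω'
    simp only [Set.mem_ofPred_eq] at hω hω'
    nlinarith
  have h3 := hNA h hh.2
  rw [h2] at h3
  simp only [nonpos_iff_eq_zero, ENNReal.ofReal_eq_zero] at h3
  linarith

/-! ### Domination by a single strategy -/

/-- A bounded subset of `ℝ^d` contains a finite family in terms of which all its elements are
expressed with uniformly bounded coefficients: a basis of its span. -/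
lemma exists_bounded_coeffs (S : Set (Evec d)) (B : ℝ) (hB : ∀ h ∈ S, ‖h‖ ≤ B) :
    ∃ (b : Set (Evec d)) (_ : Fintype b) (M : ℝ), b ⊆ S ∧ 0 ≤ M ∧
      ∀ h ∈ S, ∃ c : b → ℝ, (∀ j, |c j| ≤ M) ∧ h = ∑ j, c j • (j : Evec d) := by
  obtain ⟨b, hbS, hspan, hli⟩ := exists_linearIndependent ℝ S
  have hfin : Finite b := hli.finite
  let _ : Fintype b := Fintype.ofFinite b
  let bas := Module.Basis.span hli
  have hmem : ∀ h ∈ S, h ∈ Submodule.span ℝ (Set.range ((↑) : b → Evec d)) := by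
    intro h hh
    rw [Subtype.range_coe, hspan]
    exact Submodule.subset_span hh
  refine ⟨b, inferInstance, ∑ j, ‖(bas.coord j).toContinuousLinearMap‖ * |B|, hbS,
    Finset.sum_nonneg fun j _ => by positivity, ?_⟩
  intro h hh
  refine ⟨fun j => bas.repr ⟨h, hmem h hh⟩ j, ?_, ?_⟩
  · intro j
    refine le_trans ?_ (Finset.single_le_sum
      (f := fun j => ‖(bas.coord j).toContinuousLinearMap‖ * |B|)
      (fun j _ => by positivity) (Finset.mem_univ j))
    have := (bas.coord j).toContinuousLinearMap.le_opNorm ⟨h, hmem h hh⟩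
    have h2 : ‖(⟨h, hmem h hh⟩ : Submodule.span ℝ (Set.range ((↑) : b → Evec d)))‖ ≤ |B| :=
      (hB h hh).trans (le_abs_self B)
    calc |bas.repr ⟨h, hmem h hh⟩ j|
        = ‖(bas.coord j).toContinuousLinearMap ⟨h, hmem h hh⟩‖ := by simp
      _ ≤ _ := this.trans (by gcongr)
  · have := congrArg Subtype.val (bas.sum_repr ⟨h, hmem h hh⟩)
    simp only [Submodule.coe_sum, Submodule.coe_smul] at this
    refine this.symm.trans (Finset.sum_congr rfl fun j _ => ?_)
    congr 1
    exact congrArg Subtype.val (Module.Basis.span_apply hli j)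

/-- One strategy `θ` dominates, up to the factor `lam`, all admissible strategies of initial
wealth `1`, outside a null set not depending on the strategy. -/
lemma exists_dominating {Q : Measure Ω} [IsProbabilityMeasure Q] {Y : Ω → Evec d}
    (hY : Measurable Y) {B : ℝ} (hB : ∀ h ∈ Dx Q Y 1, ‖h‖ ≤ B) :
    ∃ θ ∈ Hx Q Y 1, ∃ lam : ℝ, 1 ≤ lam ∧
      ∀ᵐ ω ∂Q, ∀ h ∈ Dx Q Y 1, 1 + ⟪h, Y ω⟫_ℝ ≤ lam * (1 / 2 + ⟪θ, Y ω⟫_ℝ) := by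
  obtain ⟨b, _, M, hbS, hM, hc⟩ := exists_bounded_coeffs (Dx Q Y 1) B hB
  set k : ℝ := (Fintype.card b : ℝ) with hk
  have hk0 : 0 ≤ k := by positivity
  have hkM : 0 ≤ k * M := by positivity
  set lam : ℝ := 4 * (k * M) + 2 with hlam
  have hlam0 : 0 < lam := by positivity
  have hpos : ∀ᵐ ω ∂Q, ∀ j : b, 0 ≤ 1 + ⟪(j : Evec d), Y ω⟫_ℝ :=
    ae_all_iff.2 fun j => (mem_Hx_iff hY).1 (hbS j.2).1
  have hθ : ∀ ω, ⟪(M / lam) • ∑ j : b, (j : Evec d), Y ω⟫_ℝ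
      = M / lam * ∑ j : b, ⟪(j : Evec d), Y ω⟫_ℝ := by
    intro ω
    rw [real_inner_smul_left, sum_inner]
  refine ⟨(M / lam) • ∑ j : b, (j : Evec d), ?_, lam, by linarith, ?_⟩
  · rw [mem_Hx_iff hY]
    filter_upwards [hpos] with ω hω
    rw [hθ]
    have h1 : -k ≤ ∑ j : b, ⟪(j : Evec d), Y ω⟫_ℝ := by
      have : ∑ j : b, (-1 : ℝ) ≤ ∑ j : b, ⟪(j : Evec d), Y ω⟫_ℝ :=
        Finset.sum_le_sum fun j _ => by linarith [hω j]
      simpa [hk] using this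
    have h2 : M / lam * (-k) ≤ M / lam * ∑ j : b, ⟪(j : Evec d), Y ω⟫_ℝ := by gcongr
    have h3 : M / lam * k ≤ 1 := by
      rw [div_mul_eq_mul_div, div_le_one hlam0]
      nlinarith
    linarith
  · filter_upwards [hpos] with ω hω h hh
    obtain ⟨c, hcM, hsum⟩ := hc h hh
    have h1 : ⟪h, Y ω⟫_ℝ ≤ M * ∑ j : b, ⟪(j : Evec d), Y ω⟫_ℝ + 2 * (k * M) := by
      have e1 : ⟪h, Y ω⟫_ℝ = ∑ j : b, c j * ⟪(j : Evec d), Y ω⟫_ℝ := by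
        conv_lhs => rw [hsum, sum_inner]
        simp only [real_inner_smul_left]
      have e2 : ∑ j : b, (M * ⟪(j : Evec d), Y ω⟫_ℝ + 2 * M)
          = M * ∑ j : b, ⟪(j : Evec d), Y ω⟫_ℝ + 2 * (k * M) := by
        rw [Finset.sum_add_distrib, ← Finset.mul_sum]
        simp [hk]
        ring
      rw [e1, ← e2]
      refine Finset.sum_le_sum fun j _ => ?_
      -- `c t ≤ M t + 2 M` because `c (t + 1) ≤ M (t + 1)` and `-c ≤ M`
      have := hω j
      have := abs_le.1 (hcM j)
      nlinarith
    rw [hθ]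
    have : lam * (1 / 2 + M / lam * ∑ j : b, ⟪(j : Evec d), Y ω⟫_ℝ)
        = lam / 2 + M * ∑ j : b, ⟪(j : Evec d), Y ω⟫_ℝ := by
      field_simp
    rw [this]
    linarith

lemma smul_mem_Dx {Q : Measure Ω} [IsProbabilityMeasure Q] {Y : Ω → Evec d}
    (hY : Measurable Y) (h0D : (0 : Evec d) ∈ Dv Q Y) {x R : ℝ} (hR : 0 < R) (hxR : x ≤ R)
    {h : Evec d} (hh : h ∈ Dx Q Y x) : R⁻¹ • h ∈ Dx Q Y 1 := by
  refine ⟨?_, ?_⟩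
  · rw [mem_Hx_iff hY]
    filter_upwards [(mem_Hx_iff hY).1 hh.1] with ω hω
    rw [real_inner_smul_left]
    have : 0 ≤ R⁻¹ * (R + ⟪h, Y ω⟫_ℝ) := mul_nonneg (by positivity) (by linarith)
    rwa [mul_add, inv_mul_cancel₀ hR.ne'] at this
  · rw [mem_Dv_iff h0D]
    exact Submodule.smul_mem _ _ ((mem_Dv_iff h0D _).1 hh.2)

/-- Asymptotic elasticity turns the dominating strategy into an integrable bound on the positive
part of utility, uniform over all wealths `x ≤ R` and all strategies in `D_x`. -/
lemma exists_bound {Q : Measure Ω} [IsProbabilityMeasure Q] {Y : Ω → Evec d}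
    (hY : Measurable Y) (h0D : (0 : Evec d) ∈ Dv Q Y) {B : ℝ} (hB : ∀ h ∈ Dx Q Y 1, ‖h‖ ≤ B)
    {V : Ω → ℝ → EReal} (hVmono : ∀ ω, Monotone (V ω))
    {γ K : ℝ} (hK : 0 < K)
    {C : Ω → ℝ} (hCmeas : Measurable C) (hCint : Integrable C Q)
    (hAE : ∀ ω, ∀ lam x : ℝ, 1 ≤ lam →
      V ω (lam * x) ≤ ((K * lam ^ γ : ℝ) : EReal) * (V ω (x + 1 / 2) + (C ω : EReal)))
    (hInt1 : ∀ h ∈ Hx Q Y 1, ∫⁻ ω, ePos (V ω (1 + ⟪h, Y ω⟫_ℝ)) ∂Q < ⊤)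
    {R : ℝ} (hR : 1 ≤ R) :
    ∃ L : Ω → ℝ≥0∞, ∫⁻ ω, L ω ∂Q < ⊤ ∧ ∀ᵐ ω ∂Q, ∀ x ≤ R, ∀ h ∈ Dx Q Y x,
      ePos (V ω (x + ⟪h, Y ω⟫_ℝ)) ≤ L ω := by
  obtain ⟨θ, hθ, lam, hlam, hdom⟩ := exists_dominating hY hB
  have hR0 : 0 < R := by linarith
  have hRl : 1 ≤ R * lam := by nlinarith
  set c : ℝ := K * (R * lam) ^ γ with hc
  have hc0 : 0 ≤ c := by positivity
  refine ⟨fun ω => ENNReal.ofReal c *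
    (ePos (V ω (1 + ⟪θ, Y ω⟫_ℝ)) + ENNReal.ofReal (C ω)), ?_, ?_⟩
  · rw [lintegral_const_mul' _ _ ENNReal.ofReal_ne_top,
      lintegral_add_right _ hCmeas.ennreal_ofReal]
    exact ENNReal.mul_lt_top ENNReal.ofReal_lt_top
      (ENNReal.add_lt_top.2 ⟨hInt1 θ hθ, hCint.lintegral_lt_top⟩)
  · filter_upwards [hdom] with ω hω x hx h hh
    have h1 := hω _ (smul_mem_Dx hY h0D hR0 hx hh)
    rw [real_inner_smul_left] at h1
    have h2 : x + ⟪h, Y ω⟫_ℝ ≤ (R * lam) * (1 / 2 + ⟪θ, Y ω⟫_ℝ) := by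
      have h3 : R * (1 + R⁻¹ * ⟪h, Y ω⟫_ℝ) ≤ R * (lam * (1 / 2 + ⟪θ, Y ω⟫_ℝ)) := by gcongr
      rw [mul_add, mul_inv_cancel_left₀ hR0.ne', ← mul_assoc] at h3
      linarith
    have h4 := (hVmono ω h2).trans (hAE ω (R * lam) _ hRl)
    rw [show (1 / 2 + ⟪θ, Y ω⟫_ℝ + 1 / 2 : ℝ) = 1 + ⟪θ, Y ω⟫_ℝ by ring] at h4
    refine (ePos_mono h4).trans ?_
    rw [ePos_eq, EReal.toENNReal_mul (by exact_mod_cast hc0), EReal.real_coe_toENNReal]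
    gcongr
    exact EReal.toENNReal_add_le

/-! ### Semicontinuity of expected utility -/

/-- Substituting a random wealth into `V` is measurable: by monotonicity and upper semicontinuity
`V(ω, Z ω)` is the infimum of `V(ω, q)` over the rationals `q > Z ω`. -/
lemma measurable_V {V : Ω → ℝ → EReal} (hVmeas : ∀ x : ℝ, Measurable fun ω => V ω x)
    (hVmono : ∀ ω, Monotone (V ω)) (hVusc : ∀ ω, UpperSemicontinuous (V ω))
    {Z : Ω → ℝ} (hZ : Measurable Z) : Measurable fun ω => V ω (Z ω) := by
  classical
  have key : (fun ω => V ω (Z ω)) = fun ω => ⨅ q : ℚ, if Z ω < (q : ℝ) then V ω q else ⊤ := by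
    funext ω
    refine le_antisymm (le_iInf fun q => ?_) ?_
    · split_ifs with h
      · exact hVmono ω h.le
      · exact le_top
    · refine le_of_forall_gt fun y hy => ?_
      obtain ⟨ε, hε, hball⟩ := Metric.eventually_nhds_iff.1 (hVusc ω (Z ω) y hy)
      obtain ⟨q, hq1, hq2⟩ := exists_rat_btwn (show Z ω < Z ω + ε by linarith)
      refine (iInf_le _ q).trans_lt ?_
      rw [if_pos hq1]
      refine hball ?_
      rw [Real.dist_eq, abs_of_pos (by linarith)]
      linarith
  rw [key]
  exact Measurable.iInf fun q =>
    Measurable.ite (measurableSet_lt hZ measurable_const) (hVmeas q) measurable_const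

/-- Fatou's lemma for the generalised integral: upper semicontinuity along a pointwise convergent
sequence of wealths whose utilities have an integrable upper bound. -/
lemma limsup_geint_le {Q : Measure Ω} {V : Ω → ℝ → EReal}
    (hVmeas : ∀ x : ℝ, Measurable fun ω => V ω x)
    (hVmono : ∀ ω, Monotone (V ω)) (hVusc : ∀ ω, UpperSemicontinuous (V ω))
    {Z : ℕ → Ω → ℝ} {Z' : Ω → ℝ} (hZ : ∀ n, Measurable (Z n))
    (hlim : ∀ ω, Tendsto (fun n => Z n ω) atTop (𝓝 (Z' ω)))
    {L : Ω → ℝ≥0∞} (hL : ∫⁻ ω, L ω ∂Q < ⊤)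
    (hbound : ∀ n, ∀ᵐ ω ∂Q, ePos (V ω (Z n ω)) ≤ L ω) :
    limsup (fun n => geint Q fun ω => V ω (Z n ω)) atTop ≤ geint Q fun ω => V ω (Z' ω) := by
  have hm : ∀ n, Measurable fun ω => V ω (Z n ω) := fun n =>
    measurable_V hVmeas hVmono hVusc (hZ n)
  have hpos : limsup (fun n => ∫⁻ ω, ePos (V ω (Z n ω)) ∂Q) atTop
      ≤ ∫⁻ ω, ePos (V ω (Z' ω)) ∂Q := by
    refine (limsup_lintegral_le L (fun n => measurable_ePos.comp (hm n)) hbound hL.ne).trans ?_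
    refine lintegral_mono fun ω => ?_
    have husc := continuous_ePos.comp_upperSemicontinuous (hVusc ω) ePos_mono
    refine le_trans ?_ (husc.limsup_le (Z' ω))
    exact limsup_le_limsup_of_le (hlim ω) (u := fun z => ePos (V ω z))
  have hneg : ∫⁻ ω, ePos (-V ω (Z' ω)) ∂Q
      ≤ liminf (fun n => ∫⁻ ω, ePos (-V ω (Z n ω)) ∂Q) atTop := by
    refine le_trans (lintegral_mono fun ω => ?_)
      (lintegral_liminf_le fun n => measurable_ePos.comp (hm n).neg)
    have hlsc := (continuous_ePos.comp continuous_neg).comp_upperSemicontinuous_antitone (hVusc ω)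
      (fun a b hab => ePos_mono (EReal.neg_le_neg_iff.2 hab))
    refine (hlsc.le_liminf (Z' ω)).trans ?_
    exact liminf_le_liminf_of_le (hlim ω) (u := fun z => ePos (-V ω z))
  have hfin : limsup (fun n => ∫⁻ ω, ePos (V ω (Z n ω)) ∂Q) atTop < ⊤ := by
    refine lt_of_le_of_lt ?_ hL
    refine (limsup_le_limsup (Eventually.of_forall fun n => lintegral_mono_ae (hbound n))).trans ?_
    simp
  have coe_mono : Monotone ((↑) : ℝ≥0∞ → EReal) := fun _ _ hab =>
    EReal.coe_ennreal_le_coe_ennreal_iff.2 hab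
  have e1 : limsup (fun n => ((∫⁻ ω, ePos (V ω (Z n ω)) ∂Q : ℝ≥0∞) : EReal)) atTop
      = ((limsup (fun n => ∫⁻ ω, ePos (V ω (Z n ω)) ∂Q) atTop : ℝ≥0∞) : EReal) :=
    (coe_mono.map_limsup_of_continuousAt _
      continuous_coe_ennreal_ereal.continuousAt).symm
  have e2 : liminf (fun n => ((∫⁻ ω, ePos (-V ω (Z n ω)) ∂Q : ℝ≥0∞) : EReal)) atTop
      = ((liminf (fun n => ∫⁻ ω, ePos (-V ω (Z n ω)) ∂Q) atTop : ℝ≥0∞) : EReal) :=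
    (coe_mono.map_liminf_of_continuousAt _
      continuous_coe_ennreal_ereal.continuousAt).symm
  have e3 : limsup (fun n => -((∫⁻ ω, ePos (-V ω (Z n ω)) ∂Q : ℝ≥0∞) : EReal)) atTop
      = -((liminf (fun n => ∫⁻ ω, ePos (-V ω (Z n ω)) ∂Q) atTop : ℝ≥0∞) : EReal) := by
    rw [← e2]
    exact EReal.limsup_neg
  have h1 : limsup (fun n => geint Q fun ω => V ω (Z n ω)) atTop ≤
      limsup (fun n => ((∫⁻ ω, ePos (V ω (Z n ω)) ∂Q : ℝ≥0∞) : EReal)) atTop +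
      limsup (fun n => -((∫⁻ ω, ePos (-V ω (Z n ω)) ∂Q : ℝ≥0∞) : EReal)) atTop := by
    refine EReal.limsup_add_le ?_ ?_
    · rw [e1]
      exact Or.inl (EReal.coe_ennreal_ne_bot _)
    · rw [e1]
      exact Or.inl (by simpa using hfin.ne)
  refine h1.trans ?_
  rw [e1, e3, geint, sub_eq_add_neg]
  exact add_le_add (EReal.coe_ennreal_le_coe_ennreal_iff.2 hpos)
    (EReal.neg_le_neg_iff.2 (EReal.coe_ennreal_le_coe_ennreal_iff.2 hneg))

/-- Sequential compactness of the optimisation problem: if `x n → x` and strategies `h n` in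
`D_{x n}` achieve the levels `c n → y`, some strategy in `D_x` achieves the level `y`. -/
lemma exists_limit_strategy {Q : Measure Ω} [IsProbabilityMeasure Q] {Y : Ω → Evec d}
    (hY : Measurable Y) (h0D : (0 : Evec d) ∈ Dv Q Y)
    {α : ℝ} (hα : 0 < α)
    (hNA : ∀ h ∈ Dv Q Y, ENNReal.ofReal α ≤ Q {ω | ⟪h, Y ω⟫_ℝ ≤ -α * ‖h‖})
    {V : Ω → ℝ → EReal} (hVmeas : ∀ x : ℝ, Measurable fun ω => V ω x)
    (hVmono : ∀ ω, Monotone (V ω)) (hVusc : ∀ ω, UpperSemicontinuous (V ω))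
    (hL : ∀ R : ℝ, 1 ≤ R → ∃ L : Ω → ℝ≥0∞, ∫⁻ ω, L ω ∂Q < ⊤ ∧ ∀ᵐ ω ∂Q, ∀ x ≤ R, ∀ h ∈ Dx Q Y x,
      ePos (V ω (x + ⟪h, Y ω⟫_ℝ)) ≤ L ω)
    {x : ℕ → ℝ} {x' : ℝ} (hx : Tendsto x atTop (𝓝 x'))
    {h : ℕ → Evec d} (hh : ∀ n, h n ∈ Dx Q Y (x n))
    {c : ℕ → EReal} {y : EReal} (hc : Tendsto c atTop (𝓝 y))
    (hch : ∀ n, c n ≤ geint Q fun ω => V ω (x n + ⟪h n, Y ω⟫_ℝ)) :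
    ∃ h' ∈ Dx Q Y x', y ≤ geint Q fun ω => V ω (x' + ⟪h', Y ω⟫_ℝ) := by
  obtain ⟨R, hR⟩ := hx.bddAbove_range
  have hxR : ∀ n, x n ≤ max R 1 := fun n => (hR ⟨n, rfl⟩).trans (le_max_left _ _)
  obtain ⟨L, hLfin, hLb⟩ := hL (max R 1) (le_max_right _ _)
  obtain ⟨h', -, φ, hφ, hlim⟩ := tendsto_subseq_of_bounded
    (Metric.isBounded_closedBall (x := (0 : Evec d)) (r := max R 1 / α)) (x := h) (fun n => by
      rw [mem_closedBall_zero_iff]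
      refine (Dx_norm_le hY hα hNA (hh n)).trans ?_
      gcongr
      exact hxR n)
  have hZlim : ∀ ω, Tendsto (fun n => x (φ n) + ⟪h (φ n), Y ω⟫_ℝ) atTop
      (𝓝 (x' + ⟪h', Y ω⟫_ℝ)) := fun ω =>
    (hx.comp hφ.tendsto_atTop).add (hlim.inner tendsto_const_nhds)
  refine ⟨h', ⟨?_, ?_⟩, ?_⟩
  · rw [mem_Hx_iff hY]
    filter_upwards [ae_all_iff.2 fun n => (mem_Hx_iff hY).1 (hh (φ n)).1] with ω hω
    exact ge_of_tendsto' (hZlim ω) hω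
  · have hcl : IsClosed (Dv Q Y) := by
      have : Dv Q Y = ((affineSpan ℝ (suppY Q Y)).direction : Set (Evec d)) :=
        Set.ext fun z => mem_Dv_iff h0D z
      rw [this]
      exact Submodule.closed_of_finiteDimensional _
    exact hcl.mem_of_tendsto hlim (Eventually.of_forall fun n => (hh (φ n)).2)
  · have h1 := limsup_geint_le (Q := Q) hVmeas hVmono hVusc
      (Z := fun n ω => x (φ n) + ⟪h (φ n), Y ω⟫_ℝ)
      (fun n => measurable_const.add (measurable_const.inner hY)) hZlim hLfin
      (fun n => hLb.mono fun ω hω => hω _ (hxR _) _ (hh _))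
    refine le_trans ?_ h1
    rw [← (hc.comp hφ.tendsto_atTop).limsup_eq]
    exact limsup_le_limsup (Eventually.of_forall fun n => hch (φ n))

/-- Under the one-period assumptions: for every `x ≥ 0` the value
`v(x)` is finite and attained by some `ĥ ∈ D_x`; moreover `v` is nondecreasing and
upper semicontinuous on `ℝ`. -/
theorem one_period_optimizer_exists
    (Q : Measure Ω) [IsProbabilityMeasure Q] (Y : Ω → Evec d) (hY : Measurable Y)
    (h0D : (0 : Evec d) ∈ Dv Q Y)
    (α : ℝ) (hα : α ∈ Set.Ioc (0 : ℝ) 1)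
    (hNA : ∀ h ∈ Dv Q Y, ENNReal.ofReal α ≤ Q {ω | ⟪h, Y ω⟫_ℝ ≤ -α * ‖h‖})
    (V : Ω → ℝ → EReal)
    (hVmeas : ∀ x : ℝ, Measurable fun ω => V ω x)
    (hVmono : ∀ ω, Monotone (V ω))
    (hVusc : ∀ ω, UpperSemicontinuous (V ω))
    (hVneg : ∀ ω, ∀ x : ℝ, x < 0 → V ω x = ⊥)
    (γ K : ℝ) (hγ : 0 ≤ γ) (hK : 0 < K)
    (C : Ω → ℝ) (hCmeas : Measurable C) (hC0 : ∀ ω, 0 ≤ C ω) (hCint : Integrable C Q)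
    (hAE : ∀ ω, ∀ lam x : ℝ, 1 ≤ lam →
      V ω (lam * x) ≤ ((K * lam ^ γ : ℝ) : EReal) * (V ω (x + 1 / 2) + (C ω : EReal)))
    (hInt1 : ∀ h ∈ Hx Q Y 1, ∫⁻ ω, ePos (V ω (1 + ⟪h, Y ω⟫_ℝ)) ∂Q < ⊤)
 :
    (∀ x : ℝ, 0 ≤ x →
      vopt Q Y V x < ⊤ ∧
      ∃ hh ∈ Dx Q Y x, vopt Q Y V x = geint Q (fun ω => V ω (x + ⟪hh, Y ω⟫_ℝ))) ∧
    Monotone (vopt Q Y V) ∧ UpperSemicontinuous (vopt Q Y V) := by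
  have hB : ∀ h ∈ Dx Q Y 1, ‖h‖ ≤ 1 / α := fun h hh => Dx_norm_le hY hα.1 hNA hh
  have hL : ∀ R : ℝ, 1 ≤ R → ∃ L : Ω → ℝ≥0∞, ∫⁻ ω, L ω ∂Q < ⊤ ∧
      ∀ᵐ ω ∂Q, ∀ x ≤ R, ∀ h ∈ Dx Q Y x, ePos (V ω (x + ⟪h, Y ω⟫_ℝ)) ≤ L ω := fun R hR =>
    exists_bound hY h0D hB hVmono hK hCmeas hCint hAE hInt1 hR
  have hle : ∀ x : ℝ, 0 ≤ x → ∀ h ∈ Hx Q Y x,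
      geint Q (fun ω => V ω (x + ⟪h, Y ω⟫_ℝ)) ≤ vopt Q Y V x := by
    intro x hx h hh
    rw [vopt, if_pos hx]
    exact le_iSup₂_of_le h hh le_rfl
  have hv : ∀ x : ℝ, 0 ≤ x → vopt Q Y V x
      = sSup ((fun h => geint Q (fun ω => V ω (x + ⟪h, Y ω⟫_ℝ))) '' Dx Q Y x) := by
    intro x hx
    refine le_antisymm ?_ (sSup_le ?_)
    · rw [vopt, if_pos hx]
      refine iSup₂_le fun h hh => ?_
      obtain ⟨h', hh', heq⟩ := exists_proj hY h0D hh
      refine le_trans (geint_mono_ae ?_) (le_sSup (Set.mem_image_of_mem _ hh'))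
      filter_upwards [heq] with ω hω
      rw [hω]
    · rintro _ ⟨h, hh, rfl⟩
      exact hle x hx h hh.1
  have hatt : ∀ x : ℝ, 0 ≤ x → ∃ hh ∈ Dx Q Y x,
      vopt Q Y V x = geint Q (fun ω => V ω (x + ⟪hh, Y ω⟫_ℝ)) := by
    intro x hx
    have hne : (Dx Q Y x).Nonempty := by
      refine ⟨0, ?_, h0D⟩
      rw [mem_Hx_iff hY]
      exact Eventually.of_forall fun ω => by simpa using hx
    obtain ⟨c, -, hc, hcS⟩ := exists_seq_tendsto_sSup
      (hne.image fun h => geint Q (fun ω => V ω (x + ⟪h, Y ω⟫_ℝ))) (OrderTop.bddAbove _)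
    choose h hh hch using hcS
    obtain ⟨h', hh', hy⟩ := exists_limit_strategy hY h0D hα.1 hNA hVmeas hVmono hVusc hL
      (x := fun _ => x) tendsto_const_nhds hh hc (fun n => (hch n).ge)
    exact ⟨h', hh', le_antisymm ((hv x hx).trans_le hy) (hle x hx h' hh'.1)⟩
  refine ⟨fun x hx => ⟨?_, hatt x hx⟩, ?_, ?_⟩
  · obtain ⟨h, hh, heq⟩ := hatt x hx
    obtain ⟨L, hLfin, hLb⟩ := hL (max x 1) (le_max_right _ _)
    rw [heq]
    have h1 : ∫⁻ ω, ePos (V ω (x + ⟪h, Y ω⟫_ℝ)) ∂Q < ⊤ :=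
      (lintegral_mono_ae (hLb.mono fun ω hω => hω x (le_max_left _ _) h hh)).trans_lt hLfin
    refine lt_of_le_of_lt (b := ((∫⁻ ω, ePos (V ω (x + ⟪h, Y ω⟫_ℝ)) ∂Q : ℝ≥0∞) : EReal)) ?_ ?_
    · have := EReal.sub_le_sub
        (le_refl ((∫⁻ ω, ePos (V ω (x + ⟪h, Y ω⟫_ℝ)) ∂Q : ℝ≥0∞) : EReal))
        (EReal.coe_ennreal_nonneg (∫⁻ ω, ePos (-V ω (x + ⟪h, Y ω⟫_ℝ)) ∂Q))
      simpa [geint] using this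
    · exact lt_top_iff_ne_top.2 (by simpa using h1.ne)
  · intro x y hxy
    by_cases hx : 0 ≤ x
    · obtain ⟨h, hh, heq⟩ := hatt x hx
      rw [heq]
      refine (geint_mono_ae (Eventually.of_forall fun ω => hVmono ω ?_)).trans
        (hle y (hx.trans hxy) h ?_)
      · linarith
      · rw [mem_Hx_iff hY]
        filter_upwards [(mem_Hx_iff hY).1 hh.1] with ω hω
        linarith
    · rw [vopt, if_neg hx]
      exact bot_le
  · intro x y hy
    by_contra hcon
    obtain ⟨u, hu, huy⟩ := exists_seq_forall_of_frequently (not_eventually.1 hcon)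
    have huy' : ∀ n, y ≤ vopt Q Y V (u n) := fun n => not_lt.1 (huy n)
    have hu0 : ∀ n, 0 ≤ u n := by
      intro n
      by_contra hn
      have := huy' n
      rw [vopt, if_neg hn] at this
      exact not_lt_bot (hy.trans_le this)
    have hx0 : 0 ≤ x := ge_of_tendsto' hu hu0
    choose h hh heq using fun n => hatt (u n) (hu0 n)
    obtain ⟨h', hh', hyle⟩ := exists_limit_strategy hY h0D hα.1 hNA hVmeas hVmono hVusc hL
      hu hh (tendsto_const_nhds (x := y)) (fun n => (huy' n).trans_eq (heq n))
    exact absurd (hyle.trans (hle x hx0 h' hh'.1)) (not_le.2 hy)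
end
end

section
/- Assume the (NA) condition. Let x ∈ ℝ and let φ ∈ Φ be a trading strategy such that V_T^{x,φ} ≥ 0 P-a.s. Then for every 1 ≤ t ≤ T, V_t^{x,φ} ≥ 0 P_t-almost surely. -/
/-!
Fix `t ≤ T` and trade only after time `t`, and only on the event `{V_t^{x,φ} < 0}`, following `φ`
there. Starting from zero capital, this strategy ends with `V_T^{x,φ} - V_t^{x,φ}` on the event,
which is larger than `V_T^{x,φ} ≥ 0`, and with `0` off the event. By (NA) its terminal wealth is
a.s. zero, so the event, viewed in `Ω^T`, is `P_T`-null; since the first marginal of `P_{s+1}` is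
`P_s`, it is already `P_t`-null.

The strategy is `lateStrategy`, the event at the various times is `lossEvent`, the wealth
comparison is `lateStrategy_wealth`, and the marginal property enters through
`Pmes_preimage_fst`.
-/

open MeasureTheory ProbabilityTheory Set
open scoped ENNReal InnerProductSpace

noncomputable section

/-- The history space `Ω^t = Ω_1 × ⋯ × Ω_t` (with `Ω^0` a one-point space). -/
def Hist (Ωs : ℕ → Type) : ℕ → Type
  | 0 => PUnit
  | t + 1 => Hist Ωs t × Ωs (t + 1)

/-- The product σ-algebra `ℱ_t = 𝒢_1 ⊗ ⋯ ⊗ 𝒢_t` on `Ω^t`. -/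
instance histMS (Ωs : ℕ → Type) [m : ∀ t, MeasurableSpace (Ωs t)] :
    ∀ t, MeasurableSpace (Hist Ωs t)
  | 0 => inferInstanceAs (MeasurableSpace PUnit)
  | t + 1 => @Prod.instMeasurableSpace _ _ (histMS Ωs t) (m (t + 1))

variable {Ωs : ℕ → Type} [∀ t, MeasurableSpace (Ωs t)] {d : ℕ}

/-- The measures `P_t` on `Ω^t` obtained by iterated integration of the kernels
`q_{s+1}` (here `q 0` applied to the unique point of `Ω^0` plays the role of `P_1`). -/
def Pmes (q : ∀ t, Kernel (Hist Ωs t) (Ωs (t + 1))) : ∀ t, Measure (Hist Ωs t)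
  | 0 => Measure.dirac PUnit.unit
  | t + 1 => (Pmes q t).bind (fun ω => ((q t) ω).map (fun y => ((ω, y) : Hist Ωs (t + 1))))

/-- The price increment `ΔS_{t+1}(ω^t, ω_{t+1}) = S_{t+1}(ω^t,ω_{t+1}) − S_t(ω^t)`. -/
def deltaS (S : ∀ t, Hist Ωs t → Evec d) (t : ℕ) (ω : Hist Ωs t) (y : Ωs (t + 1)) : Evec d :=
  S (t + 1) ((ω, y) : Hist Ωs (t + 1)) - S t ω

/-- The wealth process `V_t^{x,φ} = x + Σ_{s=1}^t φ_s · ΔS_s` (here `φ t` is the paper's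
`φ_{t+1}`, the holding over the period `(t, t+1]`). -/
def Vval (S : ∀ t, Hist Ωs t → Evec d) (φ : ∀ t, Hist Ωs t → Evec d) (x : ℝ) :
    ∀ t, Hist Ωs t → ℝ
  | 0 => fun _ => x
  | t + 1 => fun ω => Vval S φ x t ω.1 + ⟪φ t ω.1, deltaS S t ω.1 ω.2⟫_ℝ

/-- The no-arbitrage condition (NA): if `V_T^{0,φ} ≥ 0` `P`-a.s. for a (predictable)
strategy `φ`, then `V_T^{0,φ} = 0` `P`-a.s. -/
def NAcond (q : ∀ t, Kernel (Hist Ωs t) (Ωs (t + 1))) (S : ∀ t, Hist Ωs t → Evec d)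
    (T : ℕ) : Prop :=
  ∀ φ : ∀ t, Hist Ωs t → Evec d, (∀ t, Measurable (φ t)) →
    (∀ᵐ ω ∂(Pmes q T), 0 ≤ Vval S φ 0 T ω) → (∀ᵐ ω ∂(Pmes q T), Vval S φ 0 T ω = 0)

/-- The event `{V_t^{x,φ} < 0}` as a subset of `Ω^s`: its cylinder over `Ω^t` if `s ≥ t`,
and the empty set if `s < t`. -/
def lossEvent (S φ : ∀ t, Hist Ωs t → Evec d) (x : ℝ) (t : ℕ) : ∀ s, Set (Hist Ωs s)
  | 0 => {ω | 0 = t ∧ Vval S φ x 0 ω < 0}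
  | s + 1 => {ω | (s + 1 = t ∧ Vval S φ x (s + 1) ω < 0) ∨
      (s + 1 ≠ t ∧ ω.1 ∈ lossEvent S φ x t s)}

/-- The strategy that holds nothing before time `t`, and from `t` on follows `φ` exactly on the
event `{V_t^{x,φ} < 0}`. -/
def lateStrategy (S φ : ∀ t, Hist Ωs t → Evec d) (x : ℝ) (t s : ℕ) : Hist Ωs s → Evec d :=
  (lossEvent S φ x t s).indicator (φ s)

lemma measurable_Vval {S φ : ∀ t, Hist Ωs t → Evec d} (hS : ∀ t, Measurable (S t))
    (hφ : ∀ t, Measurable (φ t)) (x : ℝ) : ∀ t, Measurable (Vval S φ x t)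
  | 0 => measurable_const
  | t + 1 => by
    have hfst : Measurable (fun ω : Hist Ωs (t + 1) => ω.1) := measurable_fst
    have h2 : Measurable (fun ω : Hist Ωs (t + 1) => deltaS S t ω.1 ω.2) :=
      (hS (t + 1)).sub ((hS t).comp hfst)
    exact ((measurable_Vval hS hφ x t).comp hfst).add (((hφ t).comp hfst).inner h2)

lemma measurableSet_lossEvent {S φ : ∀ t, Hist Ωs t → Evec d} (hS : ∀ t, Measurable (S t))
    (hφ : ∀ t, Measurable (φ t)) (x : ℝ) (t : ℕ) : ∀ s, MeasurableSet (lossEvent S φ x t s)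
  | 0 => (MeasurableSet.const _).inter
      (measurableSet_lt (measurable_Vval hS hφ x 0) measurable_const)
  | s + 1 => by
    have hfst : Measurable (fun ω : Hist Ωs (s + 1) => ω.1) := measurable_fst
    exact ((MeasurableSet.const _).inter
      (measurableSet_lt (measurable_Vval hS hφ x (s + 1)) measurable_const)).union
      ((MeasurableSet.const _).inter (hfst (measurableSet_lossEvent hS hφ x t s)))

lemma lossEvent_of_lt (S φ : ∀ t, Hist Ωs t → Evec d) (x : ℝ) (t : ℕ) :
    ∀ s, s < t → ∀ ω, ω ∉ lossEvent S φ x t s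
  | 0, hs, ω, hω => hs.ne hω.1
  | s + 1, hs, ω, hω => by
    rcases hω with h | h
    · exact hs.ne h.1
    · exact lossEvent_of_lt S φ x t s (by omega) ω.1 h.2

lemma mem_lossEvent_self (S φ : ∀ t, Hist Ωs t → Evec d) (x : ℝ) :
    ∀ t (ω : Hist Ωs t), Vval S φ x t ω < 0 → ω ∈ lossEvent S φ x t t
  | 0, _, h => ⟨rfl, h⟩
  | _ + 1, _, h => Or.inl ⟨rfl, h⟩

/-- At every time the late strategy has wealth zero off the loss event, and strictly more wealth
than `φ` on it: at time `t` because `V_t^{x,φ} < 0` there, and afterwards because both gain the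
same increments. -/
lemma lateStrategy_wealth (S φ : ∀ t, Hist Ωs t → Evec d) (x : ℝ) (t : ℕ) :
    ∀ s (ω : Hist Ωs s),
      (ω ∉ lossEvent S φ x t s → Vval S (lateStrategy S φ x t) 0 s ω = 0) ∧
      (ω ∈ lossEvent S φ x t s → Vval S φ x s ω < Vval S (lateStrategy S φ x t) 0 s ω)
  | 0, ω => ⟨fun _ => rfl, fun h => h.2⟩
  | s + 1, ω => by
    have ih := lateStrategy_wealth S φ x t s ω.1
    by_cases hst : s + 1 = t
    · have hnot := lossEvent_of_lt S φ x t s (by omega) ω.1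
      have hzero : Vval S (lateStrategy S φ x t) 0 (s + 1) ω = 0 := by
        simp [Vval, ih.1 hnot, lateStrategy, hnot]
      refine ⟨fun _ => hzero, fun h => ?_⟩
      rw [hzero]
      rcases h with h | h
      · exact h.2
      · exact absurd hst h.1
    · by_cases hmem : ω.1 ∈ lossEvent S φ x t s
      · refine ⟨fun h => absurd (Or.inr ⟨hst, hmem⟩) h, fun _ => ?_⟩
        have := ih.2 hmem
        simpa [Vval, lateStrategy, hmem] using this
      · refine ⟨fun _ => by simp [Vval, ih.1 hmem, lateStrategy, hmem], fun h => ?_⟩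
        rcases h with h | h
        · exact absurd h.1 hst
        · exact absurd h.2 hmem

/-- The marginal of `P_{t+1}` on `Ω^t` is `P_t`. -/
lemma Pmes_preimage_fst (q : ∀ t, Kernel (Hist Ωs t) (Ωs (t + 1))) [∀ t, IsMarkovKernel (q t)]
    (t : ℕ) {B : Set (Hist Ωs t)} (hB : MeasurableSet B) :
    Pmes q (t + 1) {ω | ω.1 ∈ B} = Pmes q t B := by
  have hfst : Measurable (fun ω : Hist Ωs (t + 1) => ω.1) := measurable_fst
  have hmk : ∀ ω : Hist Ωs t, Measurable (fun y => ((ω, y) : Hist Ωs (t + 1))) :=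
    fun ω => measurable_prodMk_left
  have hker : Measurable
      (fun ω => ((q t) ω).map (fun y => ((ω, y) : Hist Ωs (t + 1)))) := by
    refine Measure.measurable_of_measurable_coe _ fun C hC => ?_
    simp_rw [Measure.map_apply (hmk _) hC]
    exact Kernel.measurable_kernel_prodMk_left hC
  have hC : MeasurableSet {ω : Hist Ωs (t + 1) | ω.1 ∈ B} := hfst hB
  refine (Measure.bind_apply hC hker.aemeasurable).trans ?_
  rw [← lintegral_indicator_one hB]
  refine lintegral_congr fun ω => (Measure.map_apply (hmk ω) hC).trans ?_
  change (q t) ω {_y | ω ∈ B} = _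
  by_cases h : ω ∈ B <;> simp [h]

/-- Under (NA), if `φ ∈ Φ` satisfies `V_T^{x,φ} ≥ 0` `P`-a.s.,
then `V_t^{x,φ} ≥ 0` `P_t`-a.s. for every `1 ≤ t ≤ T`. -/
theorem nonneg_wealth_at_intermediate_times
    (q : ∀ t, Kernel (Hist Ωs t) (Ωs (t + 1))) [∀ t, IsMarkovKernel (q t)]
    (S : ∀ t, Hist Ωs t → Evec d) (hS : ∀ t, Measurable (S t))
    (T : ℕ) (hNA : NAcond q S T) (x : ℝ)
    (φ : ∀ t, Hist Ωs t → Evec d) (hφ : ∀ t, Measurable (φ t))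
    (hpos : ∀ᵐ ω ∂(Pmes q T), 0 ≤ Vval S φ x T ω) :
    ∀ t, 1 ≤ t → t ≤ T → ∀ᵐ ω ∂(Pmes q t), 0 ≤ Vval S φ x t ω := by
  intro t _ htT
  -- On the loss event the late strategy beats `φ`, whose terminal wealth is nonnegative.
  have hlate : ∀ᵐ ω ∂(Pmes q T), 0 ≤ Vval S (lateStrategy S φ x t) 0 T ω := by
    filter_upwards [hpos] with ω hω
    have h := lateStrategy_wealth S φ x t T ω
    by_cases hmem : ω ∈ lossEvent S φ x t T
    · exact hω.trans (h.2 hmem).le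
    · exact (h.1 hmem).ge
  have hzero := hNA (lateStrategy S φ x t)
    (fun s => (hφ s).indicator (measurableSet_lossEvent hS hφ x t s)) hlate
  have hT : Pmes q T (lossEvent S φ x t T) = 0 := by
    refine measure_eq_zero_iff_ae_notMem.2 ?_
    filter_upwards [hpos, hzero] with ω hω h0 hmem
    have := (lateStrategy_wealth S φ x t T ω).2 hmem
    linarith
  have hback : ∀ s, t ≤ s → Pmes q s (lossEvent S φ x t s) = 0 →
      Pmes q t (lossEvent S φ x t t) = 0 := by
    intro s hs
    induction s, hs using Nat.le_induction with
    | base => exact id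
    | succ s hs ih =>
      intro h
      refine ih ?_
      rw [← Pmes_preimage_fst q s (measurableSet_lossEvent hS hφ x t s)]
      exact measure_mono_null (fun ω hω => Or.inr ⟨by omega, hω⟩) h
  filter_upwards [measure_eq_zero_iff_ae_notMem.1 (hback T htT hT)] with ω hω
  exact not_lt.1 fun h => hω (mem_lossEvent_self S φ x t ω h)
end
end
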